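/- Let d ≥ 2 and let X ⊆ ℝ^d be a nonempty polyhedral hypersurface, i.e. the bend locus of a convex PL function f(x) = max_{1≤i≤r}(⟨x, b_i⟩ + a_i). Then the one-point compactification of X is (d−2)-connected. -/

import Mathlib

open scoped RealInnerProductSpace

/-- The convex PL function `x ↦ max_{1 ≤ i ≤ r} (⟪x, b i⟫ + a i)` (an `iSup` over the
nonempty finite index type `Fin r`, hence a maximum). -/
noncomputable def plMax {d r : ℕ} (b : Fin r → EuclideanSpace ℝ (Fin d)) (a : Fin r → ℝ) :
    EuclideanSpace ℝ (Fin d) → ℝ :=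
  fun x => ⨆ i : Fin r, (⟪x, b i⟫ + a i)

/-- The bend locus of a convex PL function: the set of points where it is not differentiable. -/
def bendLocus {d r : ℕ} (b : Fin r → EuclideanSpace ℝ (Fin d)) (a : Fin r → ℝ) :
    Set (EuclideanSpace ℝ (Fin d)) :=
  {x | ¬ DifferentiableAt ℝ (plMax b a) x}

/-- A topological space `Y` is `m`-connected (`m ≥ 0`): it is nonempty, path-connected,
and all homotopy groups `π_k(Y, y)` for `1 ≤ k ≤ m` and all basepoints `y` are trivial. -/
def SpaceMConnected (m : ℕ) (Y : Type*) [TopologicalSpace Y] : Prop :=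
  Nonempty Y ∧ PathConnectedSpace Y ∧
    ∀ k : ℕ, 1 ≤ k → k ≤ m → ∀ y : Y, Subsingleton (HomotopyGroup (Fin k) Y y)

section FiniteComplement

open scoped unitInterval Topology Topology.Homotopy
open Set Module

variable {E : Type*} [NormedAddCommGroup E] [NormedSpace ℝ E]

/-- Two loops in the complement of `F` are homotopic if the segments joining corresponding
points avoid `F`. -/
lemma GenLoop.homotopic_of_lineMap_notMem {N : Type*} {F : Set E} {y : ↥Fᶜ}
    (f g : Ω^ N ↥Fᶜ y)
    (h : ∀ (s : I^N) (t : I), AffineMap.lineMap (f s : E) (g s : E) (t : ℝ) ∉ F) :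
    GenLoop.Homotopic f g := by
  have hf : Continuous fun s => (f s : E) := continuous_subtype_val.comp f.1.continuous
  have hg : Continuous fun s => (g s : E) := continuous_subtype_val.comp g.1.continuous
  refine ⟨{ toFun := fun z => ⟨AffineMap.lineMap (f z.2 : E) (g z.2 : E) (z.1 : ℝ), h z.2 z.1⟩,
            continuous_toFun := ?_, map_zero_left := ?_, map_one_left := ?_, prop' := ?_ }⟩
  · refine Continuous.subtype_mk ?_ _
    simp only [AffineMap.lineMap_apply_module]
    have hf' := hf.comp (continuous_snd (X := I))
    have hg' := hg.comp (continuous_snd (X := I))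
    simp only [Function.comp_def] at hf' hg'
    fun_prop
  · intro s
    ext
    simp
  · intro s
    ext
    simp
  · intro t s hs
    ext
    simp [GenLoop.boundary f s hs, GenLoop.boundary g s hs]

/-- Homotopy groups of the complement of a finite set in a space of dimension `n` vanish
in degrees at most `n - 2`. -/
theorem subsingleton_homotopyGroup_compl_finite [FiniteDimensional ℝ E] {N : Type*} [Fintype N]
    {F : Set E} (hF : F.Finite) (hN : Fintype.card N + 1 < finrank ℝ E) (y : ↥Fᶜ) :
    Subsingleton (HomotopyGroup N ↥Fᶜ y) := by
  suffices H : ∀ f : Ω^ N ↥Fᶜ y, GenLoop.Homotopic f GenLoop.const by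
    refine ⟨fun a b => ?_⟩
    induction a using Quotient.inductionOn with | _ f =>
    induction b using Quotient.inductionOn with | _ g =>
    exact Quotient.sound ((H f).trans (H g).symm)
  intro f
  have hf : Continuous fun s => (f s : E) := continuous_subtype_val.comp f.1.continuous
  obtain ⟨δ, hδ, hthick⟩ := (isCompact_range hf).exists_thickening_subset_open
    hF.isClosed.isOpen_compl (by rintro _ ⟨s, rfl⟩; exact (f s).2)
  let clamp : (N → ℝ) → I^N := fun s i => projIcc 0 1 zero_le_one (s i)
  have hclamp : Continuous clamp :=
    continuous_pi fun i => continuous_projIcc.comp (continuous_apply i)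
  have clamp_coe : ∀ s : I^N, clamp (fun i => (s i : ℝ)) = s := fun s => by
    funext i; exact projIcc_val zero_le_one (s i)
  obtain ⟨g, hg, hgf, hgsupp⟩ := ((hf.comp hclamp).sub
    (continuous_const (y := (y : E)))).exists_contDiff_approx 1
    (continuous_const (y := δ / 2)) (fun _ => half_pos hδ)
  have hgf' : ∀ s : I^N, dist (y + g (fun i => (s i : ℝ))) (f s) < δ / 2 := fun s => by
    have : dist (g fun i => (s i : ℝ)) (f (clamp fun i => (s i : ℝ)) - y) < δ / 2 := hgf _
    rw [clamp_coe] at this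
    rw [dist_eq_norm] at this ⊢
    convert this using 2
    abel
  have hg_bd : ∀ s ∈ Cube.boundary N, g (fun i => (s i : ℝ)) = 0 := fun s hs => by
    by_contra hne
    refine hgsupp (Function.mem_support.2 hne) ?_
    simp [clamp_coe, GenLoop.boundary f s hs]
  let φ : (N → ℝ) → ℝ := fun s => ∏ i, s i * (1 - s i)
  have hφ : ContDiff ℝ 1 φ := contDiff_prod fun i _ => by fun_prop
  have hφ_pos : ∀ s : N → ℝ, (∀ i, s i ∈ Ioo (0 : ℝ) 1) → 0 < φ s := fun s hs =>
    Finset.prod_pos fun i _ => mul_pos (hs i).1 (sub_pos.2 (hs i).2)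
  have hφ_bd : ∀ s ∈ Cube.boundary N, φ (fun i => (s i : ℝ)) = 0 := by
    rintro s ⟨i, hi⟩
    refine Finset.prod_eq_zero (Finset.mem_univ i) ?_
    rcases hi with hi | hi <;> simp [hi]
  have hφ_le : ∀ s : I^N, |φ fun i => (s i : ℝ)| ≤ 1 := fun s => by
    have h0 : ∀ i, 0 ≤ (s i : ℝ) * (1 - s i) := fun i =>
      mul_nonneg (s i).2.1 (sub_nonneg.2 (s i).2.2)
    rw [abs_of_nonneg (Finset.prod_nonneg fun i _ => h0 i)]
    exact Finset.prod_le_one (fun i _ => h0 i) fun i _ =>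
      mul_le_one₀ (s i).2.2 (sub_nonneg.2 (s i).2.2) (sub_le_self _ (s i).2.1)
  have interior_of : ∀ s : I^N, s ∉ Cube.boundary N → ∀ i, (s i : ℝ) ∈ Ioo (0 : ℝ) 1 := by
    intro s hs i
    refine ⟨lt_of_le_of_ne (s i).2.1 fun h => hs ⟨i, .inl (Subtype.ext h.symm)⟩,
      lt_of_le_of_ne (s i).2.2 fun h => hs ⟨i, .inr (Subtype.ext h)⟩⟩
  -- the directions for which the straight-line contraction of the perturbed loop meets `F`
  let S : Set (ℝ × (N → ℝ)) := Ioi 0 ×ˢ univ.pi fun _ => Ioo 0 1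
  let Ψ : E → ℝ × (N → ℝ) → E := fun p z => (φ z.2)⁻¹ • (z.1⁻¹ • (p - y) - g z.2)
  have hS : Convex ℝ S := (convex_Ioi 0).prod (convex_pi fun _ _ => convex_Ioo 0 1)
  have hΨ : ∀ p, ContDiffOn ℝ 1 (Ψ p) S := fun p => by
    have h1 : ContDiffOn ℝ 1 (fun z : ℝ × (N → ℝ) => (φ z.2)⁻¹) S :=
      (hφ.comp contDiff_snd).contDiffOn.inv fun z hz =>
        (hφ_pos _ fun i => hz.2 i (mem_univ i)).ne'
    have h2 : ContDiffOn ℝ 1 (fun z : ℝ × (N → ℝ) => z.1⁻¹) S :=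
      contDiff_fst.contDiffOn.inv fun z hz => (mem_Ioi.1 hz.1).ne'
    exact h1.smul ((h2.smul contDiffOn_const).sub (hg.comp contDiff_snd).contDiffOn)
  have hdim : dimH (⋃ p ∈ F, Ψ p '' S) < finrank ℝ E := by
    rw [dimH_bUnion hF.countable]
    refine lt_of_le_of_lt (iSup₂_le fun p _ => (hΨ p).dimH_image_le hS subset_rfl) ?_
    refine lt_of_le_of_lt (dimH_mono (subset_univ S)) ?_
    rw [Real.dimH_univ_eq_finrank, finrank_prod, finrank_self, finrank_fintype_fun_eq_card]
    exact_mod_cast (by omega)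
  obtain ⟨v, hvB, hv⟩ := (dense_compl_of_dimH_lt_finrank hdim).exists_dist_lt 0 (half_pos hδ)
  rw [dist_zero_left] at hv
  let G : (I^N) → E := fun s => y + (g (fun i => (s i : ℝ)) + φ (fun i => (s i : ℝ)) • v)
  have hG : Continuous G := by
    have hc : Continuous fun (s : I^N) (i : N) => (s i : ℝ) := by fun_prop
    exact continuous_const.add ((hg.continuous.comp hc).add
      ((hφ.continuous.comp hc).smul continuous_const))
  have hGf : ∀ s, dist (G s) (f s) < δ := fun s => by
    have h1 : dist (G s) (y + g (fun i => (s i : ℝ))) < δ / 2 := by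
      rw [dist_eq_norm]
      have : G s - (y + g (fun i => (s i : ℝ))) = φ (fun i => (s i : ℝ)) • v := by
        simp only [G]; abel
      rw [this, norm_smul, Real.norm_eq_abs]
      exact lt_of_le_of_lt (mul_le_of_le_one_left (norm_nonneg v) (hφ_le s)) hv
    linarith [dist_triangle (G s) (y + g (fun i => (s i : ℝ))) (f s), hgf' s]
  have hline : ∀ (s : I^N) (t : I), AffineMap.lineMap (f s : E) (G s) (t : ℝ) ∉ F := by
    intro s t
    refine hthick (Metric.mem_thickening_iff.2 ⟨f s, mem_range_self s, ?_⟩)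
    rw [dist_lineMap_left, Real.norm_eq_abs, abs_of_nonneg t.2.1, dist_comm]
    exact lt_of_le_of_lt (mul_le_of_le_one_left dist_nonneg t.2.2) (hGf s)
  have hGF : ∀ s, G s ∉ F := fun s => by simpa using hline s 1
  let G' : Ω^ N ↥Fᶜ y := ⟨⟨fun s => ⟨G s, hGF s⟩, hG.subtype_mk _⟩, fun s hs => by
    ext; simp [G, hg_bd s hs, hφ_bd s hs]⟩
  refine (GenLoop.homotopic_of_lineMap_notMem f G' hline).trans
    (GenLoop.homotopic_of_lineMap_notMem G' GenLoop.const fun s t hmem => ?_)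
  replace hmem : AffineMap.lineMap (G s) (y : E) (t : ℝ) ∈ F := hmem
  have hform : AffineMap.lineMap (G s) (y : E) (t : ℝ) =
      y + (1 - (t : ℝ)) • (g (fun i => (s i : ℝ)) + φ (fun i => (s i : ℝ)) • v) := by
    rw [AffineMap.lineMap_apply_module]; simp only [G]; module
  by_cases hs : s ∈ Cube.boundary N
  · rw [hform, hg_bd s hs, hφ_bd s hs] at hmem
    exact y.2 (by simpa using hmem)
  rcases t.2.2.eq_or_lt with ht | ht
  · rw [hform, ht] at hmem
    exact y.2 (by simpa using hmem)
  refine hvB (mem_biUnion hmem ⟨(1 - t, fun i => (s i : ℝ)), ⟨sub_pos.2 ht, fun i _ =>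
    interior_of s hs i⟩, ?_⟩)
  have ht' : 1 - (t : ℝ) ≠ 0 := (sub_pos.2 ht).ne'
  simp only [Ψ]
  rw [hform, add_sub_cancel_left, inv_smul_smul₀ ht', add_sub_cancel_left,
    inv_smul_smul₀ (hφ_pos _ (interior_of s hs)).ne']

/-- A space that is a retract of the complement of a finite set in an `n`-dimensional space,
`n ≥ 2`, is `(n - 2)`-connected. -/
theorem spaceMConnected_of_retract_compl_finite [FiniteDimensional ℝ E] {Y : Type*}
    [TopologicalSpace Y] (hE : 2 ≤ finrank ℝ E) {F : Set E} (hF : F.Finite)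
    (J : C(Y, ↥Fᶜ)) (R : C(↥Fᶜ, Y)) (hRJ : Function.LeftInverse R J) :
    SpaceMConnected (finrank ℝ E - 2) Y := by
  have hpc : PathConnectedSpace ↥Fᶜ := isPathConnected_iff_pathConnectedSpace.1 <|
    hF.countable.isPathConnected_compl_of_one_lt_rank <| by
      rw [← finrank_eq_rank]; exact_mod_cast hE
  have hY : PathConnectedSpace Y := hRJ.surjective.pathConnectedSpace R.continuous
  refine ⟨hY.nonempty, hY, fun k _ hk y => ?_⟩
  have hsub := subsingleton_homotopyGroup_compl_finite (N := Fin k) hF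
    (by rw [Fintype.card_fin]; omega) (J y)
  let push : (Ω^ (Fin k) Y y) → Ω^ (Fin k) ↥Fᶜ (J y) := fun f =>
    ⟨J.comp f.1, fun s hs => congrArg J (f.2 s hs)⟩
  refine ⟨fun a b => ?_⟩
  induction a using Quotient.inductionOn with | _ f =>
  induction b using Quotient.inductionOn with | _ g =>
  have h : GenLoop.Homotopic (push f) (push g) :=
    Quotient.exact (@Subsingleton.elim _ hsub (Quotient.mk _ (push f)) (Quotient.mk _ (push g)))
  have hback : ∀ f : Ω^ (Fin k) Y y, R.comp (push f).1 = f.1 := fun f => by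
    ext s; exact hRJ (f s)
  refine Quotient.sound (show f.1.HomotopicRel g.1 _ from ?_)
  rw [← hback f, ← hback g]
  exact h.comp_continuousMap R

end FiniteComplement

section RadialProjection

open Set Filter Topology Module EuclideanGeometry

variable {E : Type*} [NormedAddCommGroup E]

lemma preimage_add_mem_nhds {C : Set E} {p : E} (hC : IsOpen C) (hp : p ∈ C) :
    (· + p) ⁻¹' C ∈ 𝓝 (0 : E) :=
  (hC.preimage (by fun_prop)).mem_nhds (by simpa using hp)

variable [InnerProductSpace ℝ E]

/-- The Minkowski functional of `C` with respect to the point `p`. -/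
noncomputable def gaugeAt (C : Set E) (p x : E) : ℝ := gauge ((· + p) ⁻¹' C) (x - p)

/-- The inversion with center `c` of the point where the ray from `p` through `x` leaves `C`
(and `c` itself if the ray never leaves `C`). -/
noncomputable def invertedExit (C : Set E) (p c x : E) : E :=
  (gaugeAt C p x / ‖gaugeAt C p x • (p - c) + (x - p)‖ ^ 2) •
    (gaugeAt C p x • (p - c) + (x - p)) + c

section

variable {C : Set E} {p c x : E}

lemma gaugeAt_nonneg : 0 ≤ gaugeAt C p x := gauge_nonneg _

lemma convex_preimage_add (hC : Convex ℝ C) : Convex ℝ ((· + p) ⁻¹' C) :=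
  hC.translate_preimage_left p

lemma continuous_gaugeAt (hC : IsOpen C) (hCc : Convex ℝ C) (hp : p ∈ C) :
    Continuous (gaugeAt C p) :=
  (continuous_gauge (convex_preimage_add hCc) (preimage_add_mem_nhds hC hp)).comp
    (by fun_prop)

lemma gaugeAt_lt_one_iff (hC : IsOpen C) (hCc : Convex ℝ C) (hp : p ∈ C) :
    gaugeAt C p x < 1 ↔ x ∈ C := by
  rw [gaugeAt, gauge_lt_one_iff_mem_interior (convex_preimage_add hCc)
    (preimage_add_mem_nhds hC hp), (hC.preimage (by fun_prop)).interior_eq]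
  simp

lemma gaugeAt_le_one (hC : IsOpen C) (hCc : Convex ℝ C) (hp : p ∈ C) (hx : x ∈ closure C) :
    gaugeAt C p x ≤ 1 :=
  closure_minimal (fun _ hz => ((gaugeAt_lt_one_iff hC hCc hp).2 hz).le)
    (isClosed_le (continuous_gaugeAt hC hCc hp) continuous_const) hx

lemma gaugeAt_eq_one (hC : IsOpen C) (hCc : Convex ℝ C) (hp : p ∈ C) (hx : x ∈ closure C)
    (hx' : x ∉ C) : gaugeAt C p x = 1 :=
  (gaugeAt_le_one hC hCc hp hx).antisymm
    (not_lt.1 fun h => hx' ((gaugeAt_lt_one_iff hC hCc hp).1 h))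

/-- The exit point of the ray from `p` through `x` lies on the boundary. -/
lemma exit_mem_closure (hC : IsOpen C) (hCc : Convex ℝ C) (hp : p ∈ C)
    (hg : gaugeAt C p x ≠ 0) :
    (gaugeAt C p x)⁻¹ • (x - p) + p ∈ closure C \ C := by
  have h1 : gauge ((· + p) ⁻¹' C) ((gaugeAt C p x)⁻¹ • (x - p)) = 1 := by
    rw [gauge_smul_of_nonneg (inv_nonneg.2 gaugeAt_nonneg), smul_eq_mul]
    exact inv_mul_cancel₀ hg
  have h2 := (gauge_eq_one_iff_mem_frontier (convex_preimage_add hCc)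
    (preimage_add_mem_nhds hC hp)).1 h1
  have h3 : frontier ((· + p) ⁻¹' C) = (· + p) ⁻¹' frontier C :=
    ((Homeomorph.addRight p).preimage_frontier C).symm
  rw [h3, mem_preimage, hC.frontier_eq] at h2
  exact h2

lemma invertedExit_eq_inversion (hg : gaugeAt C p x ≠ 0) :
    invertedExit C p c x = inversion c 1 ((gaugeAt C p x)⁻¹ • (x - p) + p) := by
  have hw : gaugeAt C p x • (p - c) + (x - p) =
      gaugeAt C p x • ((gaugeAt C p x)⁻¹ • (x - p) + p - c) := by
    rw [add_sub_assoc, smul_add, smul_inv_smul₀ hg, add_comm]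
  have hpos : 0 < gaugeAt C p x := gaugeAt_nonneg.lt_of_ne' hg
  rw [invertedExit, hw, inversion, dist_eq_norm, vsub_eq_sub, vadd_eq_add, norm_smul,
    Real.norm_of_nonneg hpos.le, smul_smul]
  congr 2
  rcases eq_or_ne ‖(gaugeAt C p x)⁻¹ • (x - p) + p - c‖ 0 with h0 | h0
  · simp [h0]
  · field_simp

lemma invertedExit_of_gaugeAt_eq_zero (hg : gaugeAt C p x = 0) : invertedExit C p c x = c := by
  simp [invertedExit, hg]

lemma invertedExit_denom_ne_zero (hC : IsOpen C) (hCc : Convex ℝ C) (hp : p ∈ C)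
    (hc : c ∉ closure C \ C) (hx : x ≠ p) :
    gaugeAt C p x • (p - c) + (x - p) ≠ 0 := by
  rcases eq_or_ne (gaugeAt C p x) 0 with hg | hg
  · simpa [hg, sub_eq_zero] using hx
  · intro h0
    refine hc ?_
    convert exit_mem_closure hC hCc hp hg
    have : (gaugeAt C p x)⁻¹ • (gaugeAt C p x • (p - c) + (x - p)) = 0 := by rw [h0, smul_zero]
    rw [smul_add, inv_smul_smul₀ hg] at this
    have h := congrArg (· + c) this
    simp only [zero_add] at h
    rw [← h]
    abel

lemma continuousAt_invertedExit (hC : IsOpen C) (hCc : Convex ℝ C) (hp : p ∈ C)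
    (hc : c ∉ closure C \ C) (hx : x ≠ p) : ContinuousAt (invertedExit C p c) x := by
  have hg : ContinuousAt (gaugeAt C p) x := (continuous_gaugeAt hC hCc hp).continuousAt
  have hw : ContinuousAt (fun x => gaugeAt C p x • (p - c) + (x - p)) x :=
    (hg.smul continuousAt_const).add (continuousAt_id.sub continuousAt_const)
  refine ((hg.div (hw.norm.pow 2) ?_).smul hw).add continuousAt_const
  exact pow_ne_zero 2 (norm_ne_zero_iff.2 (invertedExit_denom_ne_zero hC hCc hp hc hx))

lemma dist_invertedExit_le (hg : gaugeAt C p x ≤ 1) (hx : ‖p - c‖ < ‖x - p‖) :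
    dist (invertedExit C p c x) c ≤ (‖x - p‖ - ‖p - c‖)⁻¹ := by
  set g := gaugeAt C p x with hgdef
  have hg0 : 0 ≤ g := gaugeAt_nonneg
  have hw : ‖x - p‖ - ‖p - c‖ ≤ ‖g • (p - c) + (x - p)‖ := by
    have h1 : ‖g • (p - c)‖ ≤ ‖p - c‖ := by
      rw [norm_smul, Real.norm_of_nonneg hg0]
      exact mul_le_of_le_one_left (norm_nonneg _) hg
    have h2 := norm_sub_le (g • (p - c) + (x - p)) (g • (p - c))
    rw [add_sub_cancel_left] at h2
    linarith
  have hpos : 0 < ‖x - p‖ - ‖p - c‖ := sub_pos.2 hx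
  have hwpos := hpos.trans_le hw
  rw [dist_eq_norm, invertedExit, add_sub_cancel_right, norm_smul, ← hgdef,
    Real.norm_of_nonneg (by positivity)]
  calc g / ‖g • (p - c) + (x - p)‖ ^ 2 * ‖g • (p - c) + (x - p)‖
      = g * ‖g • (p - c) + (x - p)‖⁻¹ := by field_simp
    _ ≤ ‖g • (p - c) + (x - p)‖⁻¹ := mul_le_of_le_one_left (by positivity) hg
    _ ≤ _ := inv_anti₀ hpos hw

end

variable [FiniteDimensional ℝ E]

/-- The one-point compactification of the complement of a nonempty finite family of disjoint
nonempty open convex sets in an `n`-dimensional space, `n ≥ 2`, is `(n - 2)`-connected. -/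
theorem spaceMConnected_onePoint_compl_sUnion (hE : 2 ≤ finrank ℝ E) {𝒞 : Set (Set E)}
    (hfin : 𝒞.Finite) (hne : 𝒞.Nonempty) (hopen : ∀ C ∈ 𝒞, IsOpen C)
    (hconv : ∀ C ∈ 𝒞, Convex ℝ C) (hnonempty : ∀ C ∈ 𝒞, C.Nonempty)
    (hdisj : 𝒞.PairwiseDisjoint id) {X : Set E} (hX : X = (⋃₀ 𝒞)ᶜ) :
    SpaceMConnected (finrank ℝ E - 2) (OnePoint X) := by
  classical
  choose! p hp using hnonempty
  obtain ⟨C₀, hC₀⟩ := hne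
  set c := p C₀
  have hXclosed : IsClosed X := by
    rw [hX]; exact (isOpen_sUnion hopen).isClosed_compl
  have notMem_X : ∀ {C}, C ∈ 𝒞 → ∀ {x}, x ∈ C → x ∉ X := fun hC x hx hxX => by
    rw [hX] at hxX; exact hxX ⟨_, hC, hx⟩
  have hcX : c ∉ X := notMem_X hC₀ (hp _ hC₀)
  have closure_sdiff : ∀ C ∈ 𝒞, closure C \ C ⊆ X := by
    rintro C hC x ⟨hx, hxC⟩
    rw [hX]
    rintro ⟨C', hC', hxC'⟩
    obtain ⟨z, hzC', hzC⟩ := mem_closure_iff.1 hx C' (hopen C' hC') hxC'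
    have : C = C' := hdisj.elim_set hC hC' z hzC hzC'
    exact hxC (this ▸ hxC')
  have hc' : ∀ C ∈ 𝒞, c ∉ closure C \ C := fun C hC h => hcX (closure_sdiff C hC h)
  -- the inverted radial projection onto `X`
  let K : E → E := fun x =>
    if h : ∃ C ∈ 𝒞, x ∈ C then invertedExit h.choose (p h.choose) c x else inversion c 1 x
  have K_cell : ∀ C ∈ 𝒞, ∀ x ∈ C, K x = invertedExit C (p C) c x := fun C hC x hx => by
    have h : ∃ C ∈ 𝒞, x ∈ C := ⟨C, hC, hx⟩
    have : h.choose = C := hdisj.elim_set h.choose_spec.1 hC x h.choose_spec.2 hx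
    simp only [K, dif_pos h, this]
  have K_X : ∀ x ∈ X, K x = inversion c 1 x := fun x hx => by
    have h : ¬ ∃ C ∈ 𝒞, x ∈ C := fun ⟨C, hC, hxC⟩ => notMem_X hC hxC hx
    simp only [K, dif_neg h]
  have K_closure : ∀ C ∈ 𝒞, ∀ x ∈ closure C, K x = invertedExit C (p C) c x := by
    intro C hC x hx
    by_cases hxC : x ∈ C
    · exact K_cell C hC x hxC
    · have h1 := gaugeAt_eq_one (hopen C hC) (hconv C hC) (hp C hC) hx hxC
      rw [K_X x (closure_sdiff C hC ⟨hx, hxC⟩), invertedExit_eq_inversion (by simp [h1]), h1]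
      simp
  let F : Set E := p '' 𝒞
  have hF : F.Finite := hfin.image p
  have hcF : c ∈ F := mem_image_of_mem p hC₀
  have hXF : ∀ x ∈ X, x ∉ F := by
    rintro _ hx ⟨C, hC, rfl⟩
    exact notMem_X hC (hp C hC) hx
  have K_mem : ∀ x, K x = c ∨ ∃ z ∈ X, K x = inversion c 1 z := by
    intro x
    by_cases hx : x ∈ X
    · exact .inr ⟨x, hx, K_X x hx⟩
    rw [hX, notMem_compl_iff] at hx
    obtain ⟨C, hC, hxC⟩ := hx
    rw [K_cell C hC x hxC]
    by_cases hg : gaugeAt C (p C) x = 0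
    · exact .inl (invertedExit_of_gaugeAt_eq_zero hg)
    · exact .inr ⟨_, closure_sdiff C hC
        (exit_mem_closure (hopen C hC) (hconv C hC) (hp C hC) hg), invertedExit_eq_inversion hg⟩
  have inversion_continuousAt : ∀ x, x ≠ c → ContinuousAt (inversion c 1) x := fun x hx =>
    continuousAt_const.inversion continuousAt_const continuousAt_id hx
  have K_continuousAt : ∀ x ∉ F, ContinuousAt K x := by
    suffices h : Continuous fun x : ↥Fᶜ => K x from fun x hx =>
      (continuousOn_iff_continuous_domRestrict.2 h).continuousAt
        (hF.isClosed.isOpen_compl.mem_nhds hx)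
    have := hfin.to_subtype
    let cover : Option 𝒞 → Set ↥Fᶜ := fun i =>
      i.elim (Subtype.val ⁻¹' X) fun C => Subtype.val ⁻¹' closure (C : Set E)
    refine (locallyFinite_of_finite cover).continuous ?_ ?_ ?_
    · refine eq_univ_of_forall fun x => mem_iUnion.2 ?_
      by_cases hx : (x : E) ∈ X
      · exact ⟨none, hx⟩
      · rw [hX, notMem_compl_iff] at hx
        obtain ⟨C, hC, hxC⟩ := hx
        exact ⟨some ⟨C, hC⟩, subset_closure hxC⟩
    · rintro (_ | C)
      · exact hXclosed.preimage continuous_subtype_val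
      · exact isClosed_closure.preimage continuous_subtype_val
    · rintro (_ | ⟨C, hC⟩)
      · refine ContinuousOn.congr (f := fun x : ↥Fᶜ => inversion c 1 (x : E)) ?_
          fun x hx => K_X x hx
        exact fun x hx => ((inversion_continuousAt x fun h => x.2 (h ▸ hcF)).comp
          continuous_subtype_val.continuousAt).continuousWithinAt
      · refine ContinuousOn.congr (f := fun x : ↥Fᶜ => invertedExit C (p C) c (x : E)) ?_
          fun x hx => K_closure C hC x hx
        exact fun x hx => ((continuousAt_invertedExit (hopen C hC) (hconv C hC) (hp C hC)
          (hc' C hC) fun h => x.2 ⟨C, hC, h.symm⟩).comp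
          continuous_subtype_val.continuousAt).continuousWithinAt
  -- behaviour at infinity
  have K_cobounded : Tendsto K (Bornology.cobounded E) (𝓝 c) := by
    rw [tendsto_iff_dist_tendsto_zero]
    have hT : ∀ q : E, Tendsto (fun x => (‖x - q‖ - ‖q - c‖)⁻¹) (Bornology.cobounded E) (𝓝 0) :=
      fun q => tendsto_inv_atTop_zero.comp (tendsto_atTop_add_const_right _ _
        (tendsto_norm_cobounded_atTop.comp (tendsto_sub_const_cobounded q)))
    have hlarge : ∀ q : E, ∀ᶠ x in Bornology.cobounded E, ‖q - c‖ < ‖x - q‖ := fun q =>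
      (tendsto_norm_cobounded_atTop.comp (tendsto_sub_const_cobounded q)).eventually_gt_atTop _
    refine (tendsto_order.2 ⟨fun a ha => .of_forall fun x => ha.trans_le dist_nonneg,
      fun ε hε => ?_⟩)
    have h1 : ∀ᶠ x in Bornology.cobounded E, ∀ q ∈ F,
        ‖q - c‖ < ‖x - q‖ ∧ (‖x - q‖ - ‖q - c‖)⁻¹ < ε :=
      (eventually_all_finite hF).2 fun q _ => (hlarge q).and ((hT q).eventually_lt_const hε)
    filter_upwards [h1] with x hx
    by_cases hxX : x ∈ X
    · rw [K_X x hxX, dist_inversion_center]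
      have := (hx c hcF).2
      simpa [dist_eq_norm] using this
    · rw [hX, notMem_compl_iff] at hxX
      obtain ⟨C, hC, hxC⟩ := hxX
      have hq := hx (p C) (mem_image_of_mem p hC)
      rw [K_cell C hC x hxC]
      exact (dist_invertedExit_le (gaugeAt_le_one (hopen C hC) (hconv C hC) (hp C hC)
        (subset_closure hxC)) hq.1).trans_lt hq.2
  -- the inverted picture
  let F' : Set E := inversion c 1 '' (F \ {c})
  have hF' : F'.Finite := (hF.subset sdiff_subset).image _
  have hcF' : c ∉ F' := by
    rintro ⟨x, hx, hxc⟩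
    exact hx.2 ((inversion_eq_center one_ne_zero).1 hxc)
  have notMem_F : ∀ y ∉ F', y ≠ c → inversion c 1 y ∉ F := fun y hy hyc h =>
    hy ⟨_, ⟨h, fun h' => hyc ((inversion_eq_center one_ne_zero).1 h')⟩,
      inversion_inversion c one_ne_zero y⟩
  have inv_notMem_F' : ∀ x ∈ X, inversion c 1 x ∉ F' := by
    rintro x hx ⟨z, hz, hzx⟩
    exact hXF x hx (inversion_injective c one_ne_zero hzx ▸ hz.1)
  let K' : E → E := fun y => if y = c then c else K (inversion c 1 y)
  have inversion_cobounded : Tendsto (inversion c (1 : ℝ)) (𝓝[≠] c) (Bornology.cobounded E) := by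
    rw [← Metric.tendsto_dist_right_atTop_iff c]
    simp only [dist_inversion_center, one_pow, one_div]
    refine tendsto_inv_nhdsGT_zero.comp (tendsto_nhdsWithin_iff.2 ⟨?_, ?_⟩)
    · have : Tendsto (fun x => dist x c) (𝓝 c) (𝓝 (dist c c)) := by
        exact (continuous_id.dist continuous_const).tendsto c
      rw [dist_self] at this
      exact this.mono_left nhdsWithin_le_nhds
    · filter_upwards [self_mem_nhdsWithin] with x hx using dist_pos.2 hx
  have hK' : Continuous fun y : ↥F'ᶜ => K' y := by
    rw [continuous_iff_continuousAt]
    rintro ⟨y, hy⟩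
    refine ContinuousAt.comp (g := K') ?_ continuous_subtype_val.continuousAt
    rcases eq_or_ne y c with hyc | hyc
    · have hval : K' c = c := if_pos rfl
      change ContinuousAt K' y
      rw [hyc, continuousAt_iff_punctured_nhds, hval]
      refine (K_cobounded.comp inversion_cobounded).congr' ?_
      filter_upwards [self_mem_nhdsWithin] with x hx
      exact (if_neg hx).symm
    · refine ((K_continuousAt _ (notMem_F y hy hyc)).comp (inversion_continuousAt y hyc)).congr ?_
      filter_upwards [isOpen_ne.mem_nhds hyc] with x hx
      exact (if_neg hx).symm
  let j : OnePoint X → E := fun z => z.elim c fun x => inversion c 1 (x : E)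
  have hj : Continuous j := by
    rw [OnePoint.continuous_iff]
    refine ⟨?_, continuous_iff_continuousAt.2 fun x =>
      (inversion_continuousAt x fun h => hcX (h ▸ x.2)).comp
        continuous_subtype_val.continuousAt⟩
    rw [coclosedCompact_eq_cocompact]
    have hcob : Tendsto (Subtype.val : X → E) (cocompact X) (Bornology.cobounded E) := by
      rw [Metric.cobounded_eq_cocompact]
      exact hXclosed.isClosedEmbedding_subtypeVal.tendsto_cocompact
    refine (K_cobounded.comp hcob).congr fun x => ?_
    exact K_X x x.2
  have hj_inj : Function.Injective j := by
    intro a b hab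
    induction a using OnePoint.rec with
    | infty =>
      induction b using OnePoint.rec with
      | infty => rfl
      | coe b =>
        exact absurd ((center_eq_inversion one_ne_zero).1 hab) fun h : (b : E) = c =>
          hcX (h ▸ b.2)
    | coe a =>
      induction b using OnePoint.rec with
      | infty =>
        exact absurd ((inversion_eq_center one_ne_zero).1 hab) fun h : (a : E) = c =>
          hcX (h ▸ a.2)
      | coe b => exact congrArg _ (Subtype.ext (inversion_injective c one_ne_zero hab))
  have hj_emb : IsEmbedding j := (hj.isClosedEmbedding hj_inj).isEmbedding
  have hjF' : ∀ z, j z ∈ F'ᶜ := by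
    intro z
    induction z using OnePoint.rec with
    | infty => exact hcF'
    | coe x => exact inv_notMem_F' x x.2
  have K'_mem : ∀ y : ↥F'ᶜ, K' y ∈ range j := by
    intro y
    simp only [K']
    split_ifs
    · exact ⟨OnePoint.infty, rfl⟩
    · rcases K_mem (inversion c 1 (y : E)) with h | ⟨z, hz, h⟩
      · exact ⟨OnePoint.infty, h.symm⟩
      · exact ⟨((⟨z, hz⟩ : X) : OnePoint X), h.symm⟩
  choose R hR using K'_mem
  have hRc : Continuous R := by
    rw [hj_emb.continuous_iff]
    exact hK'.congr fun y => (hR y).symm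
  refine spaceMConnected_of_retract_compl_finite hE hF' ⟨fun z => ⟨j z, hjF' z⟩, hj.subtype_mk _⟩
    ⟨R, hRc⟩ fun z => hj_inj ((hR _).trans ?_)
  induction z using OnePoint.rec with
  | infty => exact if_pos rfl
  | coe x =>
    have hne : inversion c 1 (x : E) ≠ c := fun h =>
      hcX ((inversion_eq_center one_ne_zero).1 h ▸ x.2)
    change K' (inversion c 1 (x : E)) = inversion c 1 (x : E)
    simp only [K', if_neg hne, inversion_inversion c one_ne_zero]
    exact K_X x x.2

end RadialProjection

section BendLocus

open Set Filter Topology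

variable {d r : ℕ} (b : Fin r → EuclideanSpace ℝ (Fin d)) (a : Fin r → ℝ)

/-- The open region on which the convex PL function agrees with its `i`-th affine piece. -/
def plCell (i : Fin r) : Set (EuclideanSpace ℝ (Fin d)) :=
  interior {x | ∀ j, ⟪x, b j⟫ + a j ≤ ⟪x, b i⟫ + a i}

variable {b a}

lemma le_plMax (x : EuclideanSpace ℝ (Fin d)) (i : Fin r) : ⟪x, b i⟫ + a i ≤ plMax b a x :=
  le_ciSup (f := fun i => ⟪x, b i⟫ + a i) (finite_range _).bddAbove i

lemma plMax_eq_of_forall_le {x : EuclideanSpace ℝ (Fin d)} {i : Fin r}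
    (h : ∀ j, ⟪x, b j⟫ + a j ≤ ⟪x, b i⟫ + a i) : plMax b a x = ⟪x, b i⟫ + a i :=
  have : Nonempty (Fin r) := ⟨i⟩
  (ciSup_le h).antisymm (le_plMax x i)

lemma hasFDerivAt_affinePiece (x : EuclideanSpace ℝ (Fin d)) (i : Fin r) :
    HasFDerivAt (fun x => ⟪x, b i⟫ + a i) (innerSL ℝ (b i)) x := by
  refine ((innerSL ℝ (b i)).hasFDerivAt.add_const (a i)).congr_of_eventuallyEq
    (.of_forall fun z => ?_)
  simp [real_inner_comm]

lemma plMax_eventuallyEq_of_mem_plCell {x : EuclideanSpace ℝ (Fin d)} {i : Fin r}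
    (hx : x ∈ plCell b a i) : plMax b a =ᶠ[𝓝 x] fun x => ⟪x, b i⟫ + a i := by
  filter_upwards [mem_interior_iff_mem_nhds.1 hx] with z hz using plMax_eq_of_forall_le hz

lemma hasFDerivAt_plMax_of_mem_plCell {x : EuclideanSpace ℝ (Fin d)} {i : Fin r}
    (hx : x ∈ plCell b a i) : HasFDerivAt (plMax b a) (innerSL ℝ (b i)) x :=
  (hasFDerivAt_affinePiece x i).congr_of_eventuallyEq (plMax_eventuallyEq_of_mem_plCell hx)

lemma innerSL_eq_fderiv_plMax {x : EuclideanSpace ℝ (Fin d)} {i : Fin r}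
    (hd : DifferentiableAt ℝ (plMax b a) x) (hi : ⟪x, b i⟫ + a i = plMax b a x) :
    innerSL ℝ (b i) = fderiv ℝ (plMax b a) x := by
  have hmin : IsLocalMin (fun z => plMax b a z - (⟪z, b i⟫ + a i)) x :=
    .of_forall fun z => by
      simp only [hi, sub_self]
      exact sub_nonneg.2 (le_plMax z i)
  exact (sub_eq_zero.1 (hmin.hasFDerivAt_eq_zero
    (hd.hasFDerivAt.sub (hasFDerivAt_affinePiece x i)))).symm

lemma affinePiece_eq_of_active {x : EuclideanSpace ℝ (Fin d)} {i j : Fin r}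
    (hd : DifferentiableAt ℝ (plMax b a) x) (hi : ⟪x, b i⟫ + a i = plMax b a x)
    (hj : ⟪x, b j⟫ + a j = plMax b a x) : b i = b j ∧ a i = a j := by
  have hb : b i = b j := by
    have h := (innerSL_eq_fderiv_plMax hd hi).trans (innerSL_eq_fderiv_plMax hd hj).symm
    exact ext_inner_right ℝ fun v => congrArg (fun L => L v) h
  refine ⟨hb, ?_⟩
  rw [hb] at hi
  linarith

lemma differentiableAt_plMax_iff [NeZero r] {x : EuclideanSpace ℝ (Fin d)} :
    DifferentiableAt ℝ (plMax b a) x ↔ ∃ i, x ∈ plCell b a i := by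
  refine ⟨fun hd => ?_, fun ⟨i, hi⟩ => (hasFDerivAt_plMax_of_mem_plCell hi).differentiableAt⟩
  obtain ⟨i, hi⟩ : ∃ i, ⟪x, b i⟫ + a i = plMax b a x :=
    exists_eq_ciSup_of_finite (f := fun i => ⟪x, b i⟫ + a i)
  refine ⟨i, mem_interior_iff_mem_nhds.2 (eventually_all.2 fun j => ?_)⟩
  rcases (le_plMax x j).eq_or_lt with hj | hj
  · obtain ⟨hb, ha⟩ := affinePiece_eq_of_active hd hi hj
    exact .of_forall fun z => by rw [hb, ha]
  · rw [← hi] at hj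
    exact (((hasFDerivAt_affinePiece x j).continuousAt.tendsto.eventually_lt
      (hasFDerivAt_affinePiece x i).continuousAt.tendsto hj)).mono fun z hz => hz.le

lemma convex_plCell (i : Fin r) : Convex ℝ (plCell b a i) := by
  refine Convex.interior ?_
  rw [ofPred_forall]
  refine convex_iInter fun j => ?_
  have h : {x : EuclideanSpace ℝ (Fin d) | ⟪x, b j⟫ + a j ≤ ⟪x, b i⟫ + a i} =
      {x | innerSL ℝ (b j - b i) x ≤ a i - a j} := by
    ext x
    simp only [mem_ofPred_eq, innerSL_apply_apply, inner_sub_left, real_inner_comm x]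
    constructor <;> intro h <;> linarith
  rw [h]
  exact convex_halfSpace_le (innerSL ℝ (b j - b i)).isLinear _

lemma exists_plCell_nonempty [NeZero r] : ∃ i, (plCell b a i).Nonempty := by
  refine nonempty_interior_of_iUnion_of_closed (fun i => ?_) (eq_univ_of_forall fun x => ?_)
  · rw [ofPred_forall]
    exact isClosed_iInter fun j => isClosed_le (by fun_prop) (by fun_prop)
  · obtain ⟨i, hi⟩ := Finite.exists_max fun i => ⟪x, b i⟫ + a i
    exact mem_iUnion.2 ⟨i, hi⟩

lemma plCell_eq_of_mem {i j : Fin r} {x : EuclideanSpace ℝ (Fin d)} (hi : x ∈ plCell b a i)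
    (hj : x ∈ plCell b a j) : plCell b a i = plCell b a j := by
  obtain ⟨hb, ha⟩ := affinePiece_eq_of_active
    (hasFDerivAt_plMax_of_mem_plCell hi).differentiableAt
    (plMax_eventuallyEq_of_mem_plCell hi).self_of_nhds.symm
    (plMax_eventuallyEq_of_mem_plCell hj).self_of_nhds.symm
  rw [plCell, plCell, hb, ha]

end BendLocus

/-- For `d ≥ 2`, the one-point compactification of a nonempty polyhedral hypersurface in
`ℝ^d` (the bend locus of a convex PL function) is `(d - 2)`-connected. -/
theorem onePoint_hypersurface_connected (d r : ℕ) (hd : 2 ≤ d) (hr : 1 ≤ r)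
    (b : Fin r → EuclideanSpace ℝ (Fin d)) (a : Fin r → ℝ)
    (hne : (bendLocus b a).Nonempty) :
    SpaceMConnected (d - 2) (OnePoint ↥(bendLocus b a)) := by
  have : NeZero r := ⟨by omega⟩
  have hfinrank : Module.finrank ℝ (EuclideanSpace ℝ (Fin d)) = d := finrank_euclideanSpace_fin
  let 𝒞 : Set (Set (EuclideanSpace ℝ (Fin d))) := {C ∈ Set.range (plCell b a) | C.Nonempty}
  have key := spaceMConnected_onePoint_compl_sUnion (hfinrank.symm ▸ hd) (𝒞 := 𝒞)
    ((Set.finite_range _).subset (Set.sep_subset _ _))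
    (exists_plCell_nonempty.elim fun i hi => ⟨_, ⟨i, rfl⟩, hi⟩)
    (by rintro _ ⟨⟨i, rfl⟩, -⟩; exact isOpen_interior)
    (by rintro _ ⟨⟨i, rfl⟩, -⟩; exact convex_plCell i)
    (fun C hC => hC.2)
    (by
      rintro _ ⟨⟨i, rfl⟩, -⟩ _ ⟨⟨j, rfl⟩, -⟩ hij
      exact Set.disjoint_left.2 fun x hi hj => hij (plCell_eq_of_mem hi hj))
    (X := bendLocus b a)
    (by
      ext x
      rw [bendLocus, Set.mem_ofPred_eq, differentiableAt_plMax_iff, Set.mem_compl_iff, not_iff_not]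
      constructor
      · rintro ⟨i, hi⟩
        exact ⟨_, ⟨⟨i, rfl⟩, x, hi⟩, hi⟩
      · rintro ⟨_, ⟨⟨i, rfl⟩, -⟩, hi⟩
        exact ⟨i, hi⟩)
  rwa [hfinrank] at key
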